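/- For every integer N ≥ 2, set h = 2(N−1). Then for every real q with 0 < q < 1, the D_N lattice theta function at the rescaled Weyl vector ρ/h, with ρ = (N−1, N−2, …, 1, 0), has the product form: ∑ over k ∈ ℤ^N with k_1 + … + k_N even of q^((1/2)·∑_{i=1}^N (k_i + (N−i)/h)²) equals η(q)^(N+1) · η(q^(1/(N−1))) / ( η(q^(1/2)) · η(q^(1/(2(N−1)))) ), where η(x) = x^(1/24)·∏_{n=1}^∞ (1−x^n). -/

import Mathlib

open scoped BigOperators

/-- The Dedekind eta function (without the modular variable normalization):
    `η(x) = x^(1/24) · ∏_{n=1}^∞ (1 − x^n)`. -/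
noncomputable def dedekindEta (x : ℝ) : ℝ := x ^ ((1 : ℝ) / 24) * ∏' n : ℕ, (1 - x ^ (n + 1))

/-!
If one coordinate of `v` equals `1/2`, the reflection `k i₀ ↦ -1 - k i₀` preserves `(v + k)²` and
flips the parity of `∑ k`, so `Θ_{D_N}(v; q)` is half of the sum over all of `ℤ^N`, which is a
product of one-dimensional theta functions; the first coordinate of `ρ/h` is indeed `1/2`.

Each of these is an infinite product by the Jacobi triple product, obtained by letting `m → ∞` in
its finite form `∑ [2m choose m + k]_{x²} x^(k²) z^k = (-xz; x²)_m (-x/z; x²)_m`. With `M = N - 1`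
and `p = q^(1/(2M))`, the factors for `ρ/h` are `(-p^(M ± j); p^(2M))_∞` for `0 ≤ j ≤ M`. The
exponents `M ± j` run through `0, …, 2M - 1` and once more through `M, 2M`, so the factors assemble
to `(-1; p)_∞ (-p^M; p^M)_∞`, which is a quotient of eta functions up to a power of `q`. The powers
of `q` match by the strange formula for `|ρ|²`.
-/

open Filter Topology Finset

lemma prod_range_add_mul_prod_range_sub {G : Type*} [CommMonoid G] (g : ℕ → G) (M : ℕ) :
    ∏ j ∈ range (M + 1), g (M + j) * g (M - j) =
      (∏ i ∈ range (2 * M), g i) * (g M * g (2 * M)) := by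
  have hsub : ∏ j ∈ range (M + 1), g (M - j) = ∏ j ∈ range (M + 1), g j := by
    simpa only [Nat.add_sub_cancel] using prod_range_reflect g (M + 1)
  rw [prod_mul_distrib, hsub, prod_range_succ, prod_range_succ, two_mul, prod_range_add]
  simp only [mul_assoc, mul_comm, mul_left_comm]

lemma pow_rpow_eq_pow {x a : ℝ} {m n : ℕ} (hx : 0 ≤ x) (h : m * a = n) : (x ^ m) ^ a = x ^ n := by
  rw [← Real.rpow_natCast_mul hx, h, Real.rpow_natCast]

section FiniteQPochhammer

variable {R : Type*} [CommRing R]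

/-- The finite `q`-Pochhammer symbol `(a; q)_n = ∏_{i < n} (1 - a q^i)`. -/
def qPochhammer (a q : R) (n : ℕ) : R := ∏ i ∈ range n, (1 - a * q ^ i)

lemma qPochhammer_zero (a q : R) : qPochhammer a q 0 = 1 := prod_range_zero _

lemma qPochhammer_succ (a q : R) (n : ℕ) :
    qPochhammer a q (n + 1) = qPochhammer a q n * (1 - a * q ^ n) := prod_range_succ _ n

end FiniteQPochhammer

section CentralQBinomial

variable {K : Type*} [Field K] {q : K}

/-- `1 / (q; q)_n` for an integer `n`, with the usual convention that it vanishes for `n < 0`. It is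
the factor of the Gaussian binomial coefficients for which the recurrence holds on all of `ℤ`. -/
def invQPochhammer (q : K) (n : ℤ) : K := if n < 0 then 0 else (qPochhammer q q n.toNat)⁻¹

/-- The Gaussian binomial coefficient `[2m choose m + k]_q`, which vanishes for `|k| > m`. -/
def centralQBinomial (q : K) (m : ℕ) (k : ℤ) : K :=
  qPochhammer q q (2 * m) * (invQPochhammer q (m + k) * invQPochhammer q (m - k))

lemma invQPochhammer_natCast (q : K) (n : ℕ) :
    invQPochhammer q n = (qPochhammer q q n)⁻¹ := by
  simp [invQPochhammer]

lemma invQPochhammer_of_neg (q : K) {n : ℤ} (hn : n < 0) : invQPochhammer q n = 0 := if_pos hn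

lemma invQPochhammer_eq_mul_succ (hq : ∀ n : ℕ, q ^ (n + 1) ≠ 1) (n : ℤ) :
    invQPochhammer q n = invQPochhammer q (n + 1) * (1 - q ^ (n + 1)) := by
  rcases lt_trichotomy n (-1) with hn | rfl | hn
  · rw [invQPochhammer_of_neg q (by lia), invQPochhammer_of_neg q (by lia), zero_mul]
  · simp [invQPochhammer]
  · lift n to ℕ using by lia
    have hfactor : 1 - q * q ^ n ≠ 0 := sub_ne_zero.2 (by simpa [pow_succ'] using (hq n).symm)
    rw [← Nat.cast_succ, invQPochhammer_natCast, invQPochhammer_natCast, qPochhammer_succ,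
      zpow_natCast, Nat.succ_eq_add_one, pow_succ', mul_inv, inv_mul_cancel_right₀ hfactor]

lemma centralQBinomial_zero (q : K) : centralQBinomial q 0 = Pi.single 0 1 := by
  ext k
  rcases lt_trichotomy k 0 with hk | rfl | hk
  · simp [centralQBinomial, invQPochhammer_of_neg q hk, hk.ne]
  · simp [centralQBinomial, invQPochhammer, qPochhammer_zero]
  · simp [centralQBinomial, invQPochhammer_of_neg q (neg_neg_of_pos hk), hk.ne']

lemma centralQBinomial_succ (hq₀ : q ≠ 0) (hq : ∀ n : ℕ, q ^ (n + 1) ≠ 1) (m : ℕ) (k : ℤ) :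
    centralQBinomial q (m + 1) k = (1 + q ^ (2 * m + 1)) * centralQBinomial q m k +
      q ^ (m + 1 - k) * centralQBinomial q m (k - 1) +
      q ^ (m + 1 + k) * centralQBinomial q m (k + 1) := by
  have hplus : invQPochhammer q (m + k) =
      invQPochhammer q (m + 1 + k) * (1 - q ^ (m + 1 + k)) := by
    rw [invQPochhammer_eq_mul_succ hq, add_right_comm]
  have hminus : invQPochhammer q (m - k) =
      invQPochhammer q (m + 1 - k) * (1 - q ^ (m + 1 - k)) := by
    rw [invQPochhammer_eq_mul_succ hq, sub_add_eq_add_sub]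
  have hplus' : invQPochhammer q (m + (k - 1)) = invQPochhammer q (m + k) * (1 - q ^ (m + k)) := by
    rw [invQPochhammer_eq_mul_succ hq, add_assoc, sub_add_cancel]
  have hminus' : invQPochhammer q (m - (k + 1)) =
      invQPochhammer q (m - k) * (1 - q ^ (m - k)) := by
    rw [invQPochhammer_eq_mul_succ hq, sub_add, add_sub_cancel_right]
  have hpoch : qPochhammer q q (2 * (m + 1)) =
      qPochhammer q q (2 * m) * (1 - q ^ (2 * m + 1)) * (1 - q ^ (2 * m + 2)) := by
    rw [mul_add_one, qPochhammer_succ, qPochhammer_succ, ← pow_succ', ← pow_succ']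
  have hpow_plus : q ^ (m + 1 + k) = q * q ^ (m + k) := by
    rw [add_right_comm, zpow_add_one₀ hq₀, mul_comm]
  have hpow_minus : q ^ (m + 1 - k) = q * q ^ (m - k) := by
    rw [← sub_add_eq_add_sub, zpow_add_one₀ hq₀, mul_comm]
  have hpow : q ^ (2 * m) = q ^ (m + k) * q ^ (m - k) := by
    rw [← zpow_add₀ hq₀, ← zpow_natCast]; congr 1; push_cast; ring
  have hpow_one : q ^ (2 * m + 1) = q ^ (m + k) * q ^ (m - k) * q := by rw [pow_succ, hpow]
  have hpow_two : q ^ (2 * m + 2) = q ^ (m + k) * q ^ (m - k) * q ^ 2 := by rw [pow_add, hpow]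
  simp only [centralQBinomial]
  rw [show (m : ℤ) - (k - 1) = m + 1 - k by ring, show (m : ℤ) + (k + 1) = m + 1 + k by ring,
    hplus', hminus', hplus, hminus, hpoch, hpow_plus, hpow_minus, hpow_one, hpow_two]
  push_cast
  ring

end CentralQBinomial

section InfiniteQPochhammer

variable {K : Type*} [NormedField K] {q : K}

/-- The infinite `q`-Pochhammer symbol `(a; q)_∞ = ∏_{n ≥ 0} (1 - a q^n)`. -/
noncomputable def qPochhammerInf (a q : K) : K := ∏' n : ℕ, (1 - a * q ^ n)

lemma pow_succ_ne_one_of_norm_lt_one (hq : ‖q‖ < 1) (n : ℕ) : q ^ (n + 1) ≠ 1 := by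
  intro h
  have := pow_lt_one₀ (norm_nonneg q) hq n.succ_ne_zero
  rw [← norm_pow, h, norm_one] at this
  exact this.false

lemma summable_norm_neg_mul_pow (hq : ‖q‖ < 1) (a : K) : Summable fun n : ℕ ↦ ‖-(a * q ^ n)‖ := by
  simpa only [norm_neg, norm_mul] using (summable_norm_geometric_of_norm_lt_one hq).mul_left ‖a‖

variable [CompleteSpace K]

lemma multipliable_one_sub_mul_pow (hq : ‖q‖ < 1) (a : K) :
    Multipliable fun n : ℕ ↦ 1 - a * q ^ n := by
  simpa only [sub_eq_add_neg] using
    multipliable_one_add_of_summable (summable_norm_neg_mul_pow hq a)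

lemma tendsto_qPochhammer (hq : ‖q‖ < 1) (a : K) :
    Tendsto (qPochhammer a q) atTop (𝓝 (qPochhammerInf a q)) :=
  (multipliable_one_sub_mul_pow hq a).tendsto_prod_tprod_nat

lemma qPochhammerInf_self_ne_zero (hq : ‖q‖ < 1) : qPochhammerInf q q ≠ 0 := by
  have hfactor (n : ℕ) : 1 + -(q * q ^ n) ≠ 0 := by
    rw [← sub_eq_add_neg, ← pow_succ']
    exact sub_ne_zero.2 (pow_succ_ne_one_of_norm_lt_one hq n).symm
  simpa only [qPochhammerInf, sub_eq_add_neg] using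
    tprod_one_add_ne_zero_of_summable hfactor (summable_norm_neg_mul_pow hq q)

lemma qPochhammerInf_eq_one_sub_mul (hq : ‖q‖ < 1) (a : K) :
    qPochhammerInf a q = (1 - a) * qPochhammerInf (a * q) q := by
  have h := tprod_eq_zero_mul' (f := fun n : ℕ ↦ 1 - a * q ^ n)
    (by simpa only [pow_succ', mul_assoc] using multipliable_one_sub_mul_pow hq (a * q))
  simpa only [qPochhammerInf, pow_zero, mul_one, pow_succ', mul_assoc] using h

lemma qPochhammerInf_mul_neg (hq : ‖q‖ < 1) (a : K) :
    qPochhammerInf a q * qPochhammerInf (-a) q = qPochhammerInf (a ^ 2) (q ^ 2) := by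
  rw [qPochhammerInf, qPochhammerInf, ← (multipliable_one_sub_mul_pow hq a).tprod_mul
    (multipliable_one_sub_mul_pow hq (-a))]
  exact tprod_congr fun n ↦ by ring

lemma prod_qPochhammerInf_mul_pow (hq : ‖q‖ < 1) (a : K) {k : ℕ} (hk : k ≠ 0) :
    ∏ r ∈ range k, qPochhammerInf (a * q ^ r) (q ^ k) = qPochhammerInf a q := by
  have : NeZero k := ⟨hk⟩
  have hqk : ‖q ^ k‖ < 1 := by simpa only [norm_pow] using pow_lt_one₀ (norm_nonneg q) hq hk
  obtain ⟨e, he⟩ : ∃ e : Fin k × ℕ ≃ ℕ, ∀ r n, e (r, n) = r + k * n :=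
    ⟨(Equiv.prodComm _ _).trans (Nat.divModEquiv k).symm, fun r n ↦ by simp [add_comm, mul_comm]⟩
  have hpow (r : Fin k) (n : ℕ) : a * q ^ e (r, n) = a * q ^ (r : ℕ) * (q ^ k) ^ n := by
    rw [he, pow_add, pow_mul, mul_assoc]
  have hmul : Multipliable fun p : Fin k × ℕ ↦ 1 - a * q ^ e p :=
    (e.multipliable_iff (f := fun n ↦ 1 - a * q ^ n)).2 (multipliable_one_sub_mul_pow hq a)
  have hmul_class (r : Fin k) : Multipliable fun n ↦ 1 - a * q ^ e (r, n) := by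
    simpa only [hpow] using multipliable_one_sub_mul_pow hqk (a * q ^ (r : ℕ))
  rw [qPochhammerInf, ← e.tprod_eq, hmul.tprod_prod' hmul_class, tprod_fintype, Finset.prod_range]
  simp only [hpow, qPochhammerInf]

lemma prod_qPochhammerInf_add_mul_sub (hq : ‖q‖ < 1) (a : K) {M : ℕ} (hM : M ≠ 0) :
    ∏ j ∈ range (M + 1), qPochhammerInf (a * q ^ (M + j)) (q ^ (2 * M)) *
        qPochhammerInf (a * q ^ (M - j)) (q ^ (2 * M)) =
      qPochhammerInf a q * qPochhammerInf (a * q ^ M) (q ^ M) := by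
  have hqM : ‖q ^ M‖ < 1 := by simpa only [norm_pow] using pow_lt_one₀ (norm_nonneg q) hq hM
  have hhalves := prod_qPochhammerInf_mul_pow hqM (a * q ^ M) two_ne_zero
  rw [prod_range_succ, prod_range_one, pow_zero, mul_one, pow_one, mul_assoc, ← pow_add,
    ← two_mul, ← pow_mul, mul_comm M 2] at hhalves
  rw [prod_range_add_mul_prod_range_sub fun r ↦ qPochhammerInf (a * q ^ r) (q ^ (2 * M)),
    prod_qPochhammerInf_mul_pow hq a (by lia), hhalves]

lemma tendsto_invQPochhammer (hq : ‖q‖ < 1) :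
    Tendsto (invQPochhammer q) atTop (𝓝 (qPochhammerInf q q)⁻¹) := by
  have hnat : Tendsto (fun n : ℕ ↦ invQPochhammer q n) atTop (𝓝 (qPochhammerInf q q)⁻¹) := by
    simpa only [invQPochhammer_natCast] using
      (tendsto_qPochhammer hq q).inv₀ (qPochhammerInf_self_ne_zero hq)
  rwa [← Nat.map_cast_int_atTop, tendsto_map'_iff]

lemma exists_norm_invQPochhammer_le (hq : ‖q‖ < 1) : ∃ C, ∀ n, ‖invQPochhammer q n‖ ≤ C := by
  obtain ⟨C, hC⟩ := (Metric.isBounded_range_of_tendsto _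
    ((tendsto_invQPochhammer hq).comp tendsto_natCast_atTop_atTop)).exists_norm_le
  refine ⟨C, fun n ↦ ?_⟩
  rcases lt_or_ge n 0 with hn | hn
  · rw [invQPochhammer_of_neg q hn, norm_zero]
    exact (norm_nonneg _).trans (hC _ (Set.mem_range_self 0))
  · lift n to ℕ using hn
    exact hC _ (Set.mem_range_self n)

lemma tendsto_centralQBinomial (hq : ‖q‖ < 1) (k : ℤ) :
    Tendsto (centralQBinomial q · k) atTop (𝓝 (qPochhammerInf q q)⁻¹) := by
  have hpoch : Tendsto (fun m ↦ qPochhammer q q (2 * m)) atTop (𝓝 (qPochhammerInf q q)) :=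
    (tendsto_qPochhammer hq q).comp (tendsto_id.const_mul_atTop' two_pos)
  have hinv (l : ℤ) :
      Tendsto (fun m : ℕ ↦ invQPochhammer q (m + l)) atTop (𝓝 (qPochhammerInf q q)⁻¹) :=
    (tendsto_invQPochhammer hq).comp
      (tendsto_atTop_add_const_right _ l tendsto_natCast_atTop_atTop)
  have hlim := hpoch.mul ((hinv k).mul (hinv (-k)))
  rwa [mul_inv_cancel_left₀ (qPochhammerInf_self_ne_zero hq)] at hlim

lemma exists_norm_centralQBinomial_le (hq : ‖q‖ < 1) :
    ∃ C, ∀ m k, ‖centralQBinomial q m k‖ ≤ C := by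
  obtain ⟨A, hA⟩ :=
    (Metric.isBounded_range_of_tendsto _ (tendsto_qPochhammer hq q)).exists_norm_le
  obtain ⟨B, hB⟩ := exists_norm_invQPochhammer_le hq
  have hA₀ : 0 ≤ A := (norm_nonneg _).trans (hA _ (Set.mem_range_self 0))
  have hB₀ : 0 ≤ B := (norm_nonneg _).trans (hB 0)
  refine ⟨A * (B * B), fun m k ↦ ?_⟩
  rw [centralQBinomial, norm_mul, norm_mul]
  gcongr
  exacts [hA _ (Set.mem_range_self _), hB _, hB _]

end InfiniteQPochhammer

section JacobiTripleProduct

variable {K : Type*} [NormedField K] {x z : K}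

lemma pow_mul_zpow_sq_sub_one (hx₀ : x ≠ 0) (hz : z ≠ 0) (m : ℕ) (k : ℤ) :
    x ^ (2 * m + 1) * z * (x ^ (k - 1) ^ 2 * z ^ (k - 1)) =
      (x ^ 2) ^ (m + 1 - k) * (x ^ k ^ 2 * z ^ k) := by
  have hx : x ^ (2 * m + 1) * x ^ (k - 1) ^ 2 = (x ^ 2) ^ (m + 1 - k) * x ^ k ^ 2 := by
    rw [← zpow_natCast x (2 * m + 1), ← zpow_natCast x 2, ← zpow_mul, ← zpow_add₀ hx₀,
      ← zpow_add₀ hx₀]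
    congr 1
    push_cast
    ring
  rw [mul_mul_mul_comm, hx, ← zpow_one_add₀ hz, add_sub_cancel, mul_assoc]

lemma pow_mul_zpow_sq_add_one (hx₀ : x ≠ 0) (hz : z ≠ 0) (m : ℕ) (k : ℤ) :
    x ^ (2 * m + 1) / z * (x ^ (k + 1) ^ 2 * z ^ (k + 1)) =
      (x ^ 2) ^ (m + 1 + k) * (x ^ k ^ 2 * z ^ k) := by
  have h := pow_mul_zpow_sq_sub_one hx₀ (inv_ne_zero hz) m (-k)
  rwa [← neg_add', neg_sq, neg_sq, inv_zpow', inv_zpow', neg_neg, neg_neg, sub_neg_eq_add,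
    ← div_eq_mul_inv] at h

lemma hasSum_centralQBinomial_mul (hx₀ : x ≠ 0) (hx : ‖x‖ < 1) (hz : z ≠ 0) (m : ℕ) :
    HasSum (fun k : ℤ ↦ centralQBinomial (x ^ 2) m k * (x ^ k ^ 2 * z ^ k))
      (qPochhammer (-(x * z)) (x ^ 2) m * qPochhammer (-(x / z)) (x ^ 2) m) := by
  have hx2 : ‖x ^ 2‖ < 1 := by
    simpa only [norm_pow] using pow_lt_one₀ (norm_nonneg x) hx two_ne_zero
  induction m with
  | zero =>
    convert hasSum_single (0 : ℤ) fun k hk ↦ ?_ using 1 <;>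
      simp_all [centralQBinomial_zero, qPochhammer_zero]
  | succ m ih =>
    have hcentre := ih.mul_left (1 + (x ^ 2) ^ (2 * m + 1))
    have hright := ((Equiv.subRight (1 : ℤ)).hasSum_iff.2 ih).mul_left (x ^ (2 * m + 1) * z)
    have hleft := ((Equiv.addRight (1 : ℤ)).hasSum_iff.2 ih).mul_left (x ^ (2 * m + 1) / z)
    have hproduct (A B : K) :
        A * (1 - -(x * z) * (x ^ 2) ^ m) * (B * (1 - -(x / z) * (x ^ 2) ^ m)) =
          (1 + (x ^ 2) ^ (2 * m + 1)) * (A * B) + x ^ (2 * m + 1) * z * (A * B) +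
            x ^ (2 * m + 1) / z * (A * B) := by
      field_simp
      ring
    rw [qPochhammer_succ, qPochhammer_succ, hproduct]
    refine ((hcentre.add hright).add hleft).congr_fun fun k ↦ ?_
    rw [centralQBinomial_succ (pow_ne_zero 2 hx₀) (pow_succ_ne_one_of_norm_lt_one hx2)]
    simp only [Function.comp_apply, Equiv.subRight_apply, Equiv.coe_addRight]
    linear_combination -centralQBinomial (x ^ 2) m (k - 1) * pow_mul_zpow_sq_sub_one hx₀ hz m k -
      centralQBinomial (x ^ 2) m (k + 1) * pow_mul_zpow_sq_add_one hx₀ hz m k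

variable [CompleteSpace K]

lemma summable_pow_sq_mul_pow (hx₀ : x ≠ 0) (hx : ‖x‖ < 1) (hz : z ≠ 0) :
    Summable fun n : ℕ ↦ x ^ n ^ 2 * z ^ n := by
  refine summable_of_ratio_test_tendsto_lt_one zero_lt_one
    (.of_forall fun n ↦ mul_ne_zero (pow_ne_zero _ hx₀) (pow_ne_zero _ hz)) ?_
  have hratio (n : ℕ) : ‖x ^ (n + 1) ^ 2 * z ^ (n + 1)‖ / ‖x ^ n ^ 2 * z ^ n‖ =
      ‖x‖ ^ (2 * n + 1) * ‖z‖ := by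
    rw [← norm_div, ← norm_pow, ← norm_mul]
    congr 1
    field_simp
    ring
  have hexp : Tendsto (fun n : ℕ ↦ 2 * n + 1) atTop atTop :=
    tendsto_atTop_mono (fun n : ℕ ↦ (by lia : n ≤ 2 * n + 1)) tendsto_id
  simpa only [hratio, Function.comp_def, zero_mul] using
    ((tendsto_pow_atTop_nhds_zero_of_lt_one (norm_nonneg x) hx).comp hexp).mul_const ‖z‖

lemma summable_zpow_sq_mul_zpow (hx₀ : x ≠ 0) (hx : ‖x‖ < 1) (hz : z ≠ 0) :
    Summable fun k : ℤ ↦ x ^ k ^ 2 * z ^ k := by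
  refine .of_nat_of_neg ?_ ?_
  · exact_mod_cast summable_pow_sq_mul_pow hx₀ hx hz
  · have h := summable_pow_sq_mul_pow hx₀ hx (inv_ne_zero hz)
    simp only [neg_sq, zpow_neg, zpow_natCast, ← Nat.cast_pow, ← inv_pow]
    exact h

theorem jacobi_triple_product (hx₀ : x ≠ 0) (hx : ‖x‖ < 1) (hz : z ≠ 0) :
    ∑' k : ℤ, x ^ k ^ 2 * z ^ k = qPochhammerInf (x ^ 2) (x ^ 2) *
      (qPochhammerInf (-(x * z)) (x ^ 2) * qPochhammerInf (-(x / z)) (x ^ 2)) := by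
  have hx2 : ‖x ^ 2‖ < 1 := by
    simpa only [norm_pow] using pow_lt_one₀ (norm_nonneg x) hx two_ne_zero
  obtain ⟨C, hC⟩ := exists_norm_centralQBinomial_le hx2
  have hbound : Summable fun k : ℤ ↦ C * ‖x ^ k ^ 2 * z ^ k‖ := by
    have := summable_zpow_sq_mul_zpow (norm_ne_zero_iff.2 hx₀) ((norm_norm x).trans_lt hx)
      (norm_ne_zero_iff.2 hz)
    simpa only [norm_mul, norm_zpow] using this.mul_left C
  have hsum := tendsto_tsum_of_dominated_convergence hbound
    (fun k ↦ (tendsto_centralQBinomial hx2 k).mul_const (x ^ k ^ 2 * z ^ k))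
    (.of_forall fun m k ↦ by rw [norm_mul]; gcongr; exact hC m k)
  simp only [(hasSum_centralQBinomial_mul hx₀ hx hz _).tsum_eq, tsum_mul_left] at hsum
  have hprod := (tendsto_qPochhammer hx2 (-(x * z))).mul (tendsto_qPochhammer hx2 (-(x / z)))
  rw [tendsto_nhds_unique hprod hsum, mul_inv_cancel_left₀ (qPochhammerInf_self_ne_zero hx2)]

end JacobiTripleProduct

section TsumPi

theorem summable_norm_prod_pi {ι β R : Type*} [Fintype ι] [NormedCommRing R] {f : ι → β → R}
    (hf : ∀ i, Summable fun b ↦ ‖f i b‖) : Summable fun b : ι → β ↦ ‖∏ i, f i (b i)‖ := by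
  have induct := @Fintype.induction_empty_option (fun ι _ ↦ ∀ f : ι → β → R,
    (∀ i, Summable fun b ↦ ‖f i b‖) → Summable fun b : ι → β ↦ ‖∏ i, f i (b i)‖)
  refine induct (fun α ι _ e ih f hf ↦ ?_) (fun f _ ↦ ?_) (fun ι _ ih f hf ↦ ?_) ι f hf
  · let := Fintype.ofEquiv ι e.symm
    rw [← (e.arrowCongr (Equiv.refl β)).summable_iff]
    refine (ih (fun a ↦ f (e a)) fun a ↦ hf _).congr fun b ↦ ?_
    simp [← e.prod_comp]
  · exact (hasSum_fintype _).summable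
  · rw [← Equiv.piOptionEquivProd.symm.summable_iff]
    refine ((hf none).mul_norm (ih (fun i ↦ f (some i)) fun i ↦ hf (some i))).congr fun b ↦ ?_
    simp [Fintype.prod_option]

theorem tsum_prod_pi {ι β R : Type*} [Fintype ι] [NormedCommRing R] [CompleteSpace R]
    {f : ι → β → R} (hf : ∀ i, Summable fun b ↦ ‖f i b‖) :
    ∑' b : ι → β, ∏ i, f i (b i) = ∏ i, ∑' b, f i b := by
  have induct := @Fintype.induction_empty_option (fun ι _ ↦ ∀ f : ι → β → R,
    (∀ i, Summable fun b ↦ ‖f i b‖) → ∑' b : ι → β, ∏ i, f i (b i) = ∏ i, ∑' b, f i b)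
  refine induct (fun α ι _ e ih f hf ↦ ?_) (fun f _ ↦ ?_) (fun ι _ ih f hf ↦ ?_) ι f hf
  · let := Fintype.ofEquiv ι e.symm
    rw [← e.prod_comp, ← ih _ fun a ↦ hf _, ← (e.arrowCongr (Equiv.refl β)).tsum_eq]
    simp [← e.prod_comp]
  · simp
  · rw [Fintype.prod_option, ← ih _ fun i ↦ hf _, tsum_mul_tsum_of_summable_norm (hf none)
      (summable_norm_prod_pi fun i ↦ hf _), ← Equiv.piOptionEquivProd.symm.tsum_eq]
    simp [Fintype.prod_option]

theorem two_nsmul_tsum_subtype_of_equiv {α G : Type*} [AddCommGroup G] [UniformSpace G]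
    [IsUniformAddGroup G] [CompleteSpace G] [T2Space G] {f : α → G} (hf : Summable f) (s : Set α)
    (e : α ≃ α) (hs : ∀ a, e a ∈ s ↔ a ∉ s) (hfe : ∀ a, f (e a) = f a) :
    2 • ∑' a : s, f a = ∑' a, f a := by
  have hcompl : ∑' a : ↥sᶜ, f a = ∑' a : s, f a := by
    rw [← (e.subtypeEquiv fun a ↦ (hs a).symm : ↥sᶜ ≃ s).tsum_eq]
    exact tsum_congr fun a ↦ (hfe a).symm
  rw [← (hf.subtype s).tsum_add_tsum_compl (hf.subtype sᶜ), hcompl, two_nsmul]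

end TsumPi

section Eta

lemma dedekindEta_eq_mul_qPochhammerInf (x : ℝ) :
    dedekindEta x = x ^ (1 / 24 : ℝ) * qPochhammerInf x x := by
  simp only [dedekindEta, qPochhammerInf, pow_succ']

variable {x : ℝ}

lemma dedekindEta_ne_zero (hx₀ : 0 < x) (hx₁ : x < 1) : dedekindEta x ≠ 0 := by
  rw [dedekindEta_eq_mul_qPochhammerInf]
  exact mul_ne_zero (Real.rpow_pos_of_pos hx₀ _).ne'
    (qPochhammerInf_self_ne_zero ((Real.norm_of_nonneg hx₀.le).trans_lt hx₁))

lemma dedekindEta_sq_eq_mul (hx₀ : 0 < x) (hx₁ : x < 1) :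
    dedekindEta (x ^ 2) = x ^ (1 / 24 : ℝ) * qPochhammerInf (-x) x * dedekindEta x := by
  rw [dedekindEta_eq_mul_qPochhammerInf, dedekindEta_eq_mul_qPochhammerInf,
    ← qPochhammerInf_mul_neg ((Real.norm_of_nonneg hx₀.le).trans_lt hx₁), sq x,
    Real.mul_rpow hx₀.le hx₀.le]
  ring

end Eta

section LatticeTheta

/-- The theta function `Θ_ℤ(v; q) = ∑_{k ∈ ℤ} q^((v + k)² / 2)` of the lattice `ℤ` at `v`. -/
noncomputable def thetaZ (v q : ℝ) : ℝ := ∑' k : ℤ, q ^ ((1 / 2 : ℝ) * ((k : ℝ) + v) ^ 2)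

/-- The theta function `Θ_{D_N}(v; q) = ∑ q^((v + k)² / 2)` of the lattice `D_N` of integer vectors
`k` with even coordinate sum, at `v`; the `N` coordinates are indexed by `ι`. -/
noncomputable def thetaD {ι : Type*} [Fintype ι] (v : ι → ℝ) (q : ℝ) : ℝ :=
  ∑' k : {k : ι → ℤ // Even (∑ i, k i)}, q ^ ((1 / 2 : ℝ) * ∑ i, ((k.1 i : ℝ) + v i) ^ 2)

variable {q : ℝ}

lemma rpow_half_mul_add_sq (hq₀ : 0 < q) (v : ℝ) (k : ℤ) :
    q ^ ((1 / 2 : ℝ) * ((k : ℝ) + v) ^ 2) =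
      q ^ (v ^ 2 / 2) * ((q ^ (1 / 2 : ℝ)) ^ k ^ 2 * (q ^ v) ^ k) := by
  rw [← Real.rpow_mul_intCast hq₀.le, ← Real.rpow_mul_intCast hq₀.le, ← Real.rpow_add hq₀,
    ← Real.rpow_add hq₀]
  congr 1
  push_cast
  ring

lemma summable_rpow_half_mul_add_sq (hq₀ : 0 < q) (hq₁ : q < 1) (v : ℝ) :
    Summable fun k : ℤ ↦ q ^ ((1 / 2 : ℝ) * ((k : ℝ) + v) ^ 2) := by
  have hx₀ : 0 < q ^ (1 / 2 : ℝ) := Real.rpow_pos_of_pos hq₀ _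
  have hx₁ : ‖q ^ (1 / 2 : ℝ)‖ < 1 :=
    (Real.norm_of_nonneg hx₀.le).trans_lt (Real.rpow_lt_one hq₀.le hq₁ one_half_pos)
  simpa only [rpow_half_mul_add_sq hq₀] using
    (summable_zpow_sq_mul_zpow hx₀.ne' hx₁ (Real.rpow_pos_of_pos hq₀ v).ne').mul_left _

lemma thetaZ_eq_mul_qPochhammerInf (hq₀ : 0 < q) (hq₁ : q < 1) (v : ℝ) :
    thetaZ v q = q ^ (v ^ 2 / 2) * (qPochhammerInf q q *
      (qPochhammerInf (-q ^ (1 / 2 + v)) q * qPochhammerInf (-q ^ (1 / 2 - v)) q)) := by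
  have hx₀ : 0 < q ^ (1 / 2 : ℝ) := Real.rpow_pos_of_pos hq₀ _
  have hx₁ : ‖q ^ (1 / 2 : ℝ)‖ < 1 :=
    (Real.norm_of_nonneg hx₀.le).trans_lt (Real.rpow_lt_one hq₀.le hq₁ one_half_pos)
  have hx2 : (q ^ (1 / 2 : ℝ)) ^ 2 = q := by
    rw [← Real.rpow_mul_natCast hq₀.le]; norm_num
  simp only [thetaZ, rpow_half_mul_add_sq hq₀, tsum_mul_left]
  rw [jacobi_triple_product hx₀.ne' hx₁ (Real.rpow_pos_of_pos hq₀ v).ne', hx2,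
    ← Real.rpow_add hq₀, ← Real.rpow_sub hq₀]

theorem two_mul_thetaD_eq_prod {ι : Type*} [Fintype ι] {v : ι → ℝ} {i₀ : ι} (hv : v i₀ = 1 / 2)
    (hq₀ : 0 < q) (hq₁ : q < 1) : 2 * thetaD v q = ∏ i, thetaZ (v i) q := by
  classical
  have hterm (k : ι → ℤ) : q ^ ((1 / 2 : ℝ) * ∑ i, ((k i : ℝ) + v i) ^ 2) =
      ∏ i, q ^ ((1 / 2 : ℝ) * ((k i : ℝ) + v i) ^ 2) := by
    rw [mul_sum, Real.rpow_sum_of_pos hq₀]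
  have hsummable (i : ι) : Summable fun k : ℤ ↦ ‖q ^ ((1 / 2 : ℝ) * ((k : ℝ) + v i) ^ 2)‖ :=
    (summable_rpow_half_mul_add_sq hq₀ hq₁ (v i)).norm
  have hreflect : Function.Involutive fun k : ι → ℤ ↦ Function.update k i₀ (-1 - k i₀) :=
    fun k ↦ by simp
  have hparity (k : ι → ℤ) :
      Even (∑ i, Function.update k i₀ (-1 - k i₀) i) ↔ ¬ Even (∑ i, k i) := by
    rw [sum_update_of_mem (mem_univ i₀), sum_eq_add_sum_sdiff_singleton_of_mem (mem_univ i₀) k]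
    grind
  have hinvariant (k : ι → ℤ) (i : ι) :
      ((Function.update k i₀ (-1 - k i₀) i : ℝ) + v i) ^ 2 = ((k i : ℝ) + v i) ^ 2 := by
    rcases eq_or_ne i i₀ with rfl | hi
    · rw [Function.update_self, hv]
      push_cast
      ring
    · rw [Function.update_of_ne hi]
  have hhalf := two_nsmul_tsum_subtype_of_equiv (summable_norm_prod_pi hsummable).of_norm
    {k : ι → ℤ | Even (∑ i, k i)} (hreflect.toPerm _) hparity
    fun k ↦ prod_congr rfl fun i _ ↦ congrArg _ (congrArg _ (hinvariant k i))
  rw [tsum_prod_pi hsummable, two_nsmul, ← two_mul] at hhalf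
  simp only [thetaD, hterm]
  exact hhalf

end LatticeTheta

section WeylVector

-- The `D_N` case of the Freudenthal-de Vries strange formula, with `N = M + 1`. The right-hand side
-- is arranged as the exponents of the `q^(1/24)` prefactors of `dedekindEta`.
lemma sum_range_div_sq_half {M : ℕ} (hM : M ≠ 0) :
    ∑ j ∈ range (M + 1), ((j : ℝ) / (2 * M)) ^ 2 / 2 =
      ((M : ℝ) + 1) / 24 + 1 / (2 * M) / 24 + 1 / 2 / 24 := by
  have hsum (n : ℕ) : ∑ j ∈ range (n + 1), (j : ℝ) ^ 2 = n * (n + 1) * (2 * n + 1) / 6 := by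
    induction n with
    | zero => simp
    | succ n ih => rw [sum_range_succ, ih]; push_cast; ring
  simp only [div_pow]
  rw [← sum_div, ← sum_div, hsum]
  field_simp
  ring

variable {p : ℝ}

lemma thetaZ_natCast_div_eq (hp₀ : 0 < p) (hp₁ : p < 1) {M j : ℕ} (hM : M ≠ 0) (hj : j ≤ M) :
    thetaZ (j / (2 * M)) (p ^ (2 * M)) =
      (p ^ (2 * M)) ^ (((j : ℝ) / (2 * M)) ^ 2 / 2) * (qPochhammerInf (p ^ (2 * M)) (p ^ (2 * M)) *
        (qPochhammerInf (-1 * p ^ (M + j)) (p ^ (2 * M)) *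
          qPochhammerInf (-1 * p ^ (M - j)) (p ^ (2 * M)))) := by
  have hadd : (p ^ (2 * M)) ^ (1 / 2 + (j : ℝ) / (2 * M)) = p ^ (M + j) :=
    pow_rpow_eq_pow hp₀.le (by push_cast; field_simp)
  have hsub : (p ^ (2 * M)) ^ (1 / 2 - (j : ℝ) / (2 * M)) = p ^ (M - j) :=
    pow_rpow_eq_pow hp₀.le (by push_cast [hj]; field_simp)
  rw [thetaZ_eq_mul_qPochhammerInf (pow_pos hp₀ _) (pow_lt_one₀ hp₀.le hp₁ (by lia)), hadd, hsub,
    neg_one_mul, neg_one_mul]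

lemma prod_thetaZ_div_two_mul_eq_mul_qPochhammerInf (hp₀ : 0 < p) (hp₁ : p < 1) {M : ℕ}
    (hM : M ≠ 0) :
    ∏ j ∈ range (M + 1), thetaZ (j / (2 * M)) (p ^ (2 * M)) =
      (p ^ (2 * M)) ^ (((M : ℝ) + 1) / 24 + 1 / (2 * M) / 24 + 1 / 2 / 24) *
        (qPochhammerInf (p ^ (2 * M)) (p ^ (2 * M)) ^ (M + 1) *
          (2 * qPochhammerInf (-p) p * qPochhammerInf (-p ^ M) (p ^ M))) := by
  have hnorm : ‖p‖ < 1 := (Real.norm_of_nonneg hp₀.le).trans_lt hp₁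
  rw [prod_congr rfl fun j hj ↦ thetaZ_natCast_div_eq hp₀ hp₁ hM (by grind), prod_mul_distrib,
    prod_mul_distrib, ← Real.rpow_sum_of_pos (pow_pos hp₀ _), sum_range_div_sq_half hM,
    prod_const, card_range, prod_qPochhammerInf_add_mul_sub hnorm (-1) hM,
    qPochhammerInf_eq_one_sub_mul hnorm, neg_one_mul, neg_one_mul]
  norm_num

theorem prod_thetaZ_div_two_mul_eq (hp₀ : 0 < p) (hp₁ : p < 1) {M : ℕ} (hM : M ≠ 0) :
    ∏ j ∈ range (M + 1), thetaZ (j / (2 * M)) (p ^ (2 * M)) =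
      2 * (dedekindEta (p ^ (2 * M)) ^ (M + 2) * dedekindEta (p ^ 2) /
        (dedekindEta (p ^ M) * dedekindEta p)) := by
  have hpM₀ : 0 < p ^ M := pow_pos hp₀ M
  have hpM₁ : p ^ M < 1 := pow_lt_one₀ hp₀.le hp₁ hM
  have hpowers : (p ^ (2 * M)) ^ (((M : ℝ) + 1) / 24 + 1 / (2 * M) / 24 + 1 / 2 / 24) =
      ((p ^ (2 * M)) ^ (1 / 24 : ℝ)) ^ (M + 1) * p ^ (1 / 24 : ℝ) * (p ^ M) ^ (1 / 24 : ℝ) := by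
    rw [← Real.rpow_mul_natCast (pow_pos hp₀ _).le, ← Real.rpow_natCast_mul hp₀.le,
      ← Real.rpow_natCast_mul hp₀.le, ← Real.rpow_natCast_mul hp₀.le, ← Real.rpow_add hp₀,
      ← Real.rpow_add hp₀]
    congr 1
    push_cast
    field_simp
  have hη := dedekindEta_sq_eq_mul hp₀ hp₁
  have hηM := dedekindEta_sq_eq_mul hpM₀ hpM₁
  rw [← pow_mul, mul_comm M 2] at hηM
  calc
    _ = 2 * dedekindEta (p ^ (2 * M)) ^ (M + 1) * (p ^ (1 / 24 : ℝ) * qPochhammerInf (-p) p) *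
        ((p ^ M) ^ (1 / 24 : ℝ) * qPochhammerInf (-p ^ M) (p ^ M)) := by
      rw [prod_thetaZ_div_two_mul_eq_mul_qPochhammerInf hp₀ hp₁ hM, hpowers,
        dedekindEta_eq_mul_qPochhammerInf (p ^ (2 * M))]
      ring
    _ = _ := by
      rw [eq_div_of_mul_eq (dedekindEta_ne_zero hp₀ hp₁) hη.symm,
        eq_div_of_mul_eq (dedekindEta_ne_zero hpM₀ hpM₁) hηM.symm]
      ring

theorem thetaD_weylVector_div_coxeterNumber (hp₀ : 0 < p) (hp₁ : p < 1) {M : ℕ} (hM : M ≠ 0) :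
    thetaD (fun i : Fin (M + 1) ↦ ((M : ℝ) - i) / (2 * M)) (p ^ (2 * M)) =
      dedekindEta (p ^ (2 * M)) ^ (M + 2) * dedekindEta (p ^ 2) /
        (dedekindEta (p ^ M) * dedekindEta p) := by
  have htwo := two_mul_thetaD_eq_prod (v := fun i : Fin (M + 1) ↦ ((M : ℝ) - i) / (2 * M))
    (i₀ := 0) (by field_simp; simp) (pow_pos hp₀ (2 * M))
    (pow_lt_one₀ hp₀.le hp₁ (by lia))
  have hreindex : ∏ i : Fin (M + 1), thetaZ (((M : ℝ) - i) / (2 * M)) (p ^ (2 * M)) =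
      ∏ j ∈ range (M + 1), thetaZ (j / (2 * M)) (p ^ (2 * M)) := by
    rw [Fin.prod_univ_eq_prod_range fun i ↦ thetaZ (((M : ℝ) - i) / (2 * M)) (p ^ (2 * M)),
      ← prod_range_reflect]
    refine prod_congr rfl fun j hj ↦ ?_
    rw [Nat.add_sub_cancel, Nat.cast_sub (by grind), sub_sub_cancel]
  rw [hreindex, prod_thetaZ_div_two_mul_eq hp₀ hp₁ hM] at htwo
  exact mul_left_cancel₀ two_ne_zero htwo

end WeylVector

/-- Macdonald-type product formula for the `D_N` lattice theta function at
    `ρ/h`, with `h = 2(N−1)` and `ρ = (N−1, N−2, …, 1, 0)`. -/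
theorem stmt5 (N : ℕ) (hN : 2 ≤ N) (q : ℝ) (hq0 : 0 < q) (hq1 : q < 1) :
    (∑' k : {k : Fin N → ℤ // Even (∑ i, k i)},
        q ^ ((1 / 2 : ℝ) * ∑ i : Fin N,
          ((k.1 i : ℝ) + ((N : ℝ) - 1 - (i.val : ℝ)) / (2 * ((N : ℝ) - 1))) ^ 2)) =
      dedekindEta q ^ (N + 1) * dedekindEta (q ^ ((1 : ℝ) / ((N : ℝ) - 1))) /
        (dedekindEta (q ^ ((1 : ℝ) / 2)) *
          dedekindEta (q ^ ((1 : ℝ) / (2 * ((N : ℝ) - 1))))) := by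
  obtain ⟨M, rfl⟩ : ∃ M, N = M + 1 := ⟨N - 1, by lia⟩
  have hM : M ≠ 0 := by lia
  have hcast : ((M + 1 : ℕ) : ℝ) - 1 = M := by push_cast; ring
  obtain ⟨p, hp₀, hp₁, rfl⟩ : ∃ p : ℝ, 0 < p ∧ p < 1 ∧ p ^ (2 * M) = q :=
    ⟨q ^ (((2 * M : ℕ) : ℝ)⁻¹), Real.rpow_pos_of_pos hq0 _,
      Real.rpow_lt_one hq0.le hq1 (by positivity), Real.rpow_inv_natCast_pow hq0.le (by lia)⟩
  have hroot₁ : (p ^ (2 * M)) ^ (1 / (M : ℝ)) = p ^ 2 :=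
    pow_rpow_eq_pow hp₀.le (by push_cast; field_simp)
  have hroot₂ : (p ^ (2 * M)) ^ (1 / 2 : ℝ) = p ^ M :=
    pow_rpow_eq_pow hp₀.le (by push_cast; ring)
  have hroot₃ : (p ^ (2 * M)) ^ (1 / (2 * (M : ℝ))) = p := by
    simpa only [pow_one] using
      pow_rpow_eq_pow (n := 1) hp₀.le (by push_cast; field_simp)
  rw [hcast, hroot₁, hroot₂, hroot₃]
  exact thetaD_weylVector_div_coxeterNumber hp₀ hp₁ hM
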